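/- Let K and H be Hopf algebras over a field k, and let F be a sheaf of (K,H)-bicomodule algebras on M that is an H-quantum principal bundle over the ringed space (M, F^{co H}). Suppose the H-comodule (H, Δ) carries a compatible left K-comodule structure making it a (K,H)-bicomodule, and that the cleaving maps j_i: H → F(U_i) relative to a cover {U_i} are (K,H)-bicomodule maps. Then for any 2-cocycle σ of K, the sheaf Σ ∘ F of (K_σ, H)-bicomodule algebras is an H-quantum principal bundle over the ringed space (M, Σ ∘ F^{co H}). -/

import Mathlib

/-!
STATEMENT 19 (Theorem 6.3 of the paper).  Let `K` and `H` be Hopf algebras over a field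
`k`, and let `F` be a sheaf of `(K,H)`-bicomodule algebras on `M` that is an `H`-quantum
principal bundle over the ringed space `(M, F^{co H})`.  Suppose the `H`-comodule `(H, Δ)`
carries a compatible left `K`-comodule structure making it a `(K,H)`-bicomodule, and that
the cleaving maps `j_i : H → F(U_i)` relative to a cover `{U_i}` are `(K,H)`-bicomodule
maps.  Then for any 2-cocycle `σ` of `K`, the sheaf `Σ ∘ F` of `(K_σ, H)`-bicomodule
algebras is an `H`-quantum principal bundle over the ringed space `(M, Σ ∘ F^{co H})`.

ENCODING.  `Σ ∘ F` has the same underlying spaces, the same `H`- and `K`-coactions, and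
the `σ`-twisted product `a ·_σ a' = σ(a₍₋₁₎ ⊗ a'₍₋₁₎) a₍₀₎a'₍₀₎`; hence "`Σ ∘ F` is an
`H`-QPB over `(M, Σ ∘ F^{co H})`" is expressed on `F` itself via the predicate
`IsQPBWith F (coinvariants) (σ-twisted product)`:  an open cover on which the coinvariants
(unchanged under `Σ`) give the structure sheaf and every extension is cleft w.r.t. the
twisted product.  The left `K`-comodule algebra structures on the values of `F` are given
as algebra maps `ρ U : F(U) → K ⊗ F(U)` (coassociative, counital, commuting with the
`H`-coaction, compatible with restrictions); the left `K`-comodule structure on `H` is a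
linear map `ρH : H → K ⊗ H` (coassociative, counital) commuting with `Δ` (bicomodule
compatibility), and the cleaving maps are `K`-comodule maps: `ρ ∘ j = (id ⊗ j) ∘ ρH`.
-/

open TensorProduct TopologicalSpace

universe u

namespace QPB

variable (k : Type u) [CommRing k]

/-- A right `H`-comodule algebra structure on the `k`-algebra `A`. -/
structure ComodAlg (H A : Type u) [Ring H] [Ring A] [Bialgebra k H] [Algebra k A] where
  δ : A →ₐ[k] A ⊗[k] H
  counit_id : (TensorProduct.rid k A).toLinearMap ∘ₗ
      (TensorProduct.map LinearMap.id (Coalgebra.counit (R := k) (A := H))) ∘ₗ δ.toLinearMap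
      = LinearMap.id
  coassoc : (TensorProduct.assoc k A H H).toLinearMap ∘ₗ
      (TensorProduct.map δ.toLinearMap LinearMap.id) ∘ₗ δ.toLinearMap
      = (TensorProduct.map LinearMap.id (Coalgebra.comul (R := k) (A := H))) ∘ₗ δ.toLinearMap

variable {k}

/-- The subalgebra of coinvariants `A^{co H} = {a : δ a = a ⊗ 1}`. -/
def ComodAlg.coinv {H A : Type u} [Ring H] [Ring A] [Bialgebra k H] [Algebra k A]
    (c : ComodAlg k H A) : Subalgebra k A where
  carrier := {a | c.δ a = a ⊗ₜ[k] 1}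
  mul_mem' := by
    intro a b ha hb
    simp only [Set.mem_setOf_eq] at *
    rw [map_mul, ha, hb, Algebra.TensorProduct.tmul_mul_tmul, mul_one]
  one_mem' := by
    simp only [Set.mem_setOf_eq, map_one, Algebra.TensorProduct.one_def]
  add_mem' := by
    intro a b ha hb
    simp only [Set.mem_setOf_eq] at *
    rw [map_add, ha, hb, TensorProduct.add_tmul]
  algebraMap_mem' := by
    intro r
    simp only [Set.mem_setOf_eq, AlgHom.commutes, Algebra.TensorProduct.algebraMap_apply]

variable (k)

/-- Convolution of two `k`-valued linear maps on a coalgebra `X`. -/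
noncomputable def convS {X : Type u} [AddCommGroup X] [Module k X] [Coalgebra k X]
    (f g : X →ₗ[k] k) : X →ₗ[k] k :=
  (LinearMap.mul' k k) ∘ₗ (TensorProduct.map f g) ∘ₗ (Coalgebra.comul (R := k) (A := X))

/-- `σ : K ⊗ K → k` is a (convolution-invertible, normalized) 2-cocycle with convolution
inverse `σ'`. -/
noncomputable def IsTwoCocycle {K : Type u} [Ring K] [Bialgebra k K]
    (σ σ' : K ⊗[k] K →ₗ[k] k) : Prop :=
  convS k
      ((LinearMap.mul' k k) ∘ₗ
        (TensorProduct.map σ (Coalgebra.counit (R := k) (A := K))) ∘ₗ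
        (TensorProduct.assoc k K K K).symm.toLinearMap)
      (σ ∘ₗ (LinearMap.rTensor K (LinearMap.mul' k K)) ∘ₗ
        (TensorProduct.assoc k K K K).symm.toLinearMap)
    = convS k
      ((LinearMap.mul' k k) ∘ₗ
        (TensorProduct.map (Coalgebra.counit (R := k) (A := K)) σ))
      (σ ∘ₗ (LinearMap.lTensor K (LinearMap.mul' k K))) ∧
  (∀ h : K, σ (h ⊗ₜ[k] 1) = Coalgebra.counit (R := k) h) ∧
  (∀ h : K, σ ((1 : K) ⊗ₜ[k] h) = Coalgebra.counit (R := k) h) ∧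
  convS k σ σ' = Coalgebra.counit (R := k) (A := K ⊗[k] K) ∧
  convS k σ' σ = Coalgebra.counit (R := k) (A := K ⊗[k] K)

/-- The `σ`-twisted product `a ·_σ a' = σ(a₍₋₁₎ ⊗ a'₍₋₁₎) a₍₀₎a'₍₀₎` attached to a left
`K`-coaction `ρ : A → K ⊗ A`, as a linear map `A ⊗ A → A`. -/
noncomputable def leftTwistedMul {K A : Type u} [Ring K] [Ring A] [Bialgebra k K]
    [Algebra k A] (ρ : A →ₗ[k] K ⊗[k] A) (σ : K ⊗[k] K →ₗ[k] k) : A ⊗[k] A →ₗ[k] A :=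
  (TensorProduct.lid k A).toLinearMap ∘ₗ
    (TensorProduct.map σ (LinearMap.mul' k A)) ∘ₗ
    (TensorProduct.tensorTensorTensorComm k K A K A).toLinearMap ∘ₗ
    (TensorProduct.map ρ ρ)

/-- A linear map `j : H → A` is a right `H`-comodule map: `δ ∘ j = (j ⊗ id) ∘ Δ`. -/
def IsComodMap {H A : Type u} [Ring H] [Ring A] [Bialgebra k H] [Algebra k A]
    (c : ComodAlg k H A) (j : H →ₗ[k] A) : Prop :=
  c.δ.toLinearMap ∘ₗ j
    = (TensorProduct.map j LinearMap.id) ∘ₗ (Coalgebra.comul (R := k) (A := H))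

/-- Cleftness of `A^{co H} ⊆ A` relative to a (possibly twisted) product `m : A ⊗ A → A`. -/
noncomputable def IsCleftWith {H A : Type u} [Ring H] [Ring A] [Bialgebra k H] [Algebra k A]
    (c : ComodAlg k H A) (m : A ⊗[k] A →ₗ[k] A) : Prop :=
  ∃ j : H →ₗ[k] A, IsComodMap k c j ∧
    ∃ g : H →ₗ[k] A,
      m ∘ₗ (TensorProduct.map j g) ∘ₗ (Coalgebra.comul (R := k) (A := H))
        = (Algebra.linearMap k A) ∘ₗ (Coalgebra.counit (R := k) (A := H)) ∧
      m ∘ₗ (TensorProduct.map g j) ∘ₗ (Coalgebra.comul (R := k) (A := H))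
        = (Algebra.linearMap k A) ∘ₗ (Coalgebra.counit (R := k) (A := H))

/-- A sheaf of right `H`-comodule algebras on the topological space `M`. -/
structure SheafCA (H : Type u) [Ring H] [Bialgebra k H]
    (M : Type u) [TopologicalSpace M] where
  obj : Opens M → Type u
  [objRing : ∀ U, Ring (obj U)]
  [objAlg : ∀ U, Algebra k (obj U)]
  comod : ∀ U, ComodAlg k H (obj U)
  res : ∀ {U V : Opens M}, V ≤ U → obj U →ₐ[k] obj V
  res_id : ∀ (U : Opens M) (x : obj U), res (le_refl U) x = x
  res_comp : ∀ {U V W : Opens M} (hVU : V ≤ U) (hWV : W ≤ V) (x : obj U),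
      res hWV (res hVU x) = res (hWV.trans hVU) x
  res_comod : ∀ {U V : Opens M} (h : V ≤ U) (x : obj U),
      (comod V).δ (res h x)
        = TensorProduct.map (res h).toLinearMap LinearMap.id ((comod U).δ x)
  locality : ∀ {U : Opens M} (𝒱 : Set (Opens M))
      (h𝒱 : ∀ V ∈ 𝒱, V ≤ U), U ≤ sSup 𝒱 → ∀ s t : obj U,
      (∀ V (hV : V ∈ 𝒱), res (h𝒱 V hV) s = res (h𝒱 V hV) t) → s = t
  gluing : ∀ {U : Opens M} (𝒱 : Set (Opens M))
      (h𝒱 : ∀ V ∈ 𝒱, V ≤ U), U ≤ sSup 𝒱 →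
      ∀ sec : ∀ V ∈ 𝒱, obj V,
      (∀ V (hV : V ∈ 𝒱) (W) (hW : W ∈ 𝒱),
        res (inf_le_left : V ⊓ W ≤ V) (sec V hV)
          = res (inf_le_right : V ⊓ W ≤ W) (sec W hW)) →
      ∃ s : obj U, ∀ V (hV : V ∈ 𝒱), res (h𝒱 V hV) s = sec V hV

attribute [instance] SheafCA.objRing SheafCA.objAlg

/-- `F` is a quantum principal bundle over the ringed space `(M, O_M)` (`O_M` given as a
subset of each value of `F`), relative to the choice `m` of product on each value of `F`. -/
noncomputable def IsQPBWith {H M : Type u} [Ring H] [Bialgebra k H] [TopologicalSpace M]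
    (F : SheafCA k H M) (OM : ∀ U : Opens M, Set (F.obj U))
    (m : ∀ U : Opens M, F.obj U ⊗[k] F.obj U →ₗ[k] F.obj U) : Prop :=
  ∃ 𝒰 : Set (Opens M), sSup 𝒰 = ⊤ ∧
    ∀ V ∈ 𝒰, ((ComodAlg.coinv (F.comod V) : Set (F.obj V)) = OM V) ∧
      IsCleftWith k (F.comod V) (m V)

end QPB

open QPB

/-!
A functional `f` on a coalgebra acts on each of its left comodules by `f ▷ p = f(p₍₋₁₎) p₍₀₎`, and
the twisted product is `m_σ = m ∘ (σ ▷)`, where `A ⊗ A` is a comodule over `K ⊗ K`. Since `f ▷` is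
natural in the comodule and turns composition into convolution, the cocycle identity becomes
associativity of `m_σ`.

If `j` is a bicomodule map, then `X *_σ j = m ∘ (id ⊗ j) ∘ (σ ▷) ∘ (X ⊗ id) ∘ Δ` with `σ ▷` acting
on `A ⊗ H`. There `σ ▷` is right `H`-colinear, and colinear maps from `H` to the cofree comodule
`A ⊗ H` are exactly the maps `(Y ⊗ id) ∘ Δ`. So `X *_σ j = Θ X * j` for a linear map `Θ X`, and
`Θ` is bijective because `σ` is convolution invertible. Hence right `σ`-convolution by `j` is
bijective, and in an associative unital product this makes `j` invertible.
-/

namespace QPB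

section Coaction

variable {k C D P Q : Type*} [CommRing k]
  [AddCommGroup C] [Module k C] [AddCommGroup D] [Module k D]
  [AddCommGroup P] [Module k P] [AddCommGroup Q] [Module k Q]

/-- The endomorphism `p ↦ f(p₍₋₁₎) p₍₀₎` of a left comodule by which a functional `f` on the
coalgebra acts. -/
noncomputable def coactBy (ρ : P →ₗ[k] C ⊗[k] P) (f : C →ₗ[k] k) : P →ₗ[k] P :=
  (TensorProduct.lid k P).toLinearMap ∘ₗ f.rTensor P ∘ₗ ρ

/-- The coaction `p ⊗ q ↦ (p₍₋₁₎ ⊗ q₍₋₁₎) ⊗ (p₍₀₎ ⊗ q₍₀₎)` of `C ⊗ D` on the tensor product of a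
left `C`-comodule and a left `D`-comodule. -/
noncomputable def tensorCoaction (ρ : P →ₗ[k] C ⊗[k] P) (τ : Q →ₗ[k] D ⊗[k] Q) :
    P ⊗[k] Q →ₗ[k] (C ⊗[k] D) ⊗[k] (P ⊗[k] Q) :=
  (TensorProduct.tensorTensorTensorComm k C P D Q).toLinearMap ∘ₗ TensorProduct.map ρ τ

lemma coactBy_comp_of_equivariant {ρ : P →ₗ[k] C ⊗[k] P} {τ : Q →ₗ[k] D ⊗[k] Q}
    {θ : C →ₗ[k] D} {u : P →ₗ[k] Q} (h : τ ∘ₗ u = TensorProduct.map θ u ∘ₗ ρ) (f : D →ₗ[k] k) :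
    coactBy τ f ∘ₗ u = u ∘ₗ coactBy ρ (f ∘ₗ θ) := by
  have eval_map : (TensorProduct.lid k Q).toLinearMap ∘ₗ f.rTensor Q ∘ₗ TensorProduct.map θ u =
      u ∘ₗ (TensorProduct.lid k P).toLinearMap ∘ₗ (f ∘ₗ θ).rTensor P :=
    TensorProduct.ext' fun c p ↦ by simp
  simpa only [coactBy, LinearMap.comp_assoc, h] using congr($eval_map ∘ₗ ρ)

lemma coactBy_tensorCoaction (ρ : P →ₗ[k] C ⊗[k] P) (τ : Q →ₗ[k] D ⊗[k] Q)
    (f : C →ₗ[k] k) (g : D →ₗ[k] k) :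
    coactBy (tensorCoaction ρ τ) (LinearMap.mul' k k ∘ₗ TensorProduct.map f g) =
      TensorProduct.map (coactBy ρ f) (coactBy τ g) := by
  have eval_comm : (TensorProduct.lid k (P ⊗[k] Q)).toLinearMap ∘ₗ
      (LinearMap.mul' k k ∘ₗ TensorProduct.map f g).rTensor (P ⊗[k] Q) ∘ₗ
        (TensorProduct.tensorTensorTensorComm k C P D Q).toLinearMap =
      TensorProduct.map ((TensorProduct.lid k P).toLinearMap ∘ₗ f.rTensor P)
        ((TensorProduct.lid k Q).toLinearMap ∘ₗ g.rTensor Q) :=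
    TensorProduct.ext_fourfold' fun c p d q ↦ by
      simp [TensorProduct.smul_tmul', smul_smul, mul_comm]
  exact TensorProduct.ext' fun p q ↦ LinearMap.congr_fun eval_comm (ρ p ⊗ₜ τ q)

lemma coactBy_assoc_comp_rTensor (ρ : P →ₗ[k] C ⊗[k] P) (f : C →ₗ[k] k) :
    coactBy ((TensorProduct.assoc k C P Q).toLinearMap ∘ₗ ρ.rTensor Q) f =
      (coactBy ρ f).rTensor Q := by
  have eval_assoc : (TensorProduct.lid k (P ⊗[k] Q)).toLinearMap ∘ₗ f.rTensor (P ⊗[k] Q) ∘ₗ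
      (TensorProduct.assoc k C P Q).toLinearMap =
        ((TensorProduct.lid k P).toLinearMap ∘ₗ f.rTensor P).rTensor Q :=
    TensorProduct.ext_threefold fun c p q ↦ by simp [TensorProduct.smul_tmul']
  exact TensorProduct.ext' fun p q ↦ LinearMap.congr_fun eval_assoc (ρ p ⊗ₜ q)

lemma tensorCoaction_comp_map {C' D' P' Q' : Type*}
    [AddCommGroup C'] [Module k C'] [AddCommGroup D'] [Module k D']
    [AddCommGroup P'] [Module k P'] [AddCommGroup Q'] [Module k Q']
    {ρ : P →ₗ[k] C ⊗[k] P} {τ : Q →ₗ[k] D ⊗[k] Q}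
    {ρ' : P' →ₗ[k] C' ⊗[k] P'} {τ' : Q' →ₗ[k] D' ⊗[k] Q'}
    {θ : C →ₗ[k] C'} {η : D →ₗ[k] D'} {u : P →ₗ[k] P'} {v : Q →ₗ[k] Q'}
    (hu : ρ' ∘ₗ u = TensorProduct.map θ u ∘ₗ ρ) (hv : τ' ∘ₗ v = TensorProduct.map η v ∘ₗ τ) :
    tensorCoaction ρ' τ' ∘ₗ TensorProduct.map u v =
      TensorProduct.map (TensorProduct.map θ η) (TensorProduct.map u v) ∘ₗ
        tensorCoaction ρ τ := by
  rw [tensorCoaction, LinearMap.comp_assoc, ← TensorProduct.map_comp, hu, hv,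
    TensorProduct.map_comp, ← LinearMap.comp_assoc, tensorCoaction, ← LinearMap.comp_assoc]
  congr 1
  exact TensorProduct.ext_fourfold' fun _ _ _ _ ↦ rfl

lemma tensorCoaction_comp_lTensor {D' Q' : Type*} [AddCommGroup D'] [Module k D']
    [AddCommGroup Q'] [Module k Q'] (ρ : P →ₗ[k] C ⊗[k] P) {τ : Q →ₗ[k] D ⊗[k] Q}
    {τ' : Q' →ₗ[k] D' ⊗[k] Q'} {η : D →ₗ[k] D'} {v : Q →ₗ[k] Q'}
    (hv : τ' ∘ₗ v = TensorProduct.map η v ∘ₗ τ) :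
    tensorCoaction ρ τ' ∘ₗ v.lTensor P =
      TensorProduct.map (η.lTensor C) (v.lTensor P) ∘ₗ tensorCoaction ρ τ :=
  tensorCoaction_comp_map (by rw [TensorProduct.map_id]; rfl) hv

lemma tensorCoaction_comp_rTensor {C' P' : Type*} [AddCommGroup C'] [Module k C']
    [AddCommGroup P'] [Module k P'] {ρ : P →ₗ[k] C ⊗[k] P} {ρ' : P' →ₗ[k] C' ⊗[k] P'}
    (τ : Q →ₗ[k] D ⊗[k] Q) {θ : C →ₗ[k] C'} {u : P →ₗ[k] P'}
    (hu : ρ' ∘ₗ u = TensorProduct.map θ u ∘ₗ ρ) :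
    tensorCoaction ρ' τ ∘ₗ u.rTensor Q =
      TensorProduct.map (θ.rTensor D) (u.rTensor Q) ∘ₗ tensorCoaction ρ τ :=
  tensorCoaction_comp_map hu (by rw [TensorProduct.map_id]; rfl)

lemma tensorCoaction_comp_assoc_symm {E R : Type*} [AddCommGroup E] [Module k E]
    [AddCommGroup R] [Module k R] (ρ : P →ₗ[k] C ⊗[k] P) (τ : Q →ₗ[k] D ⊗[k] Q)
    (υ : R →ₗ[k] E ⊗[k] R) :
    tensorCoaction (tensorCoaction ρ τ) υ ∘ₗ (TensorProduct.assoc k P Q R).symm.toLinearMap =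
      TensorProduct.map (TensorProduct.assoc k C D E).symm.toLinearMap
          (TensorProduct.assoc k P Q R).symm.toLinearMap ∘ₗ
        tensorCoaction ρ (tensorCoaction τ υ) := by
  have comm_assoc :
      (TensorProduct.tensorTensorTensorComm k (C ⊗[k] D) (P ⊗[k] Q) E R).toLinearMap ∘ₗ
      (TensorProduct.tensorTensorTensorComm k C P D Q).toLinearMap.rTensor (E ⊗[k] R) ∘ₗ
        (TensorProduct.assoc k (C ⊗[k] P) (D ⊗[k] Q) (E ⊗[k] R)).symm.toLinearMap =
      TensorProduct.map (TensorProduct.assoc k C D E).symm.toLinearMap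
          (TensorProduct.assoc k P Q R).symm.toLinearMap ∘ₗ
        (TensorProduct.tensorTensorTensorComm k C P (D ⊗[k] E) (Q ⊗[k] R)).toLinearMap ∘ₗ
        (TensorProduct.tensorTensorTensorComm k D Q E R).toLinearMap.lTensor (C ⊗[k] P) := by
    ext; rfl
  ext p q r
  exact LinearMap.congr_fun comm_assoc (ρ p ⊗ₜ (τ q ⊗ₜ υ r))

/-- `ρ` is a counital and coassociative left coaction of the coalgebra `C` on `P`. -/
structure IsLeftCoaction [Coalgebra k C] (ρ : P →ₗ[k] C ⊗[k] P) : Prop where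
  counit : coactBy ρ Coalgebra.counit = LinearMap.id
  coassoc : Coalgebra.comul.rTensor P ∘ₗ ρ =
    (TensorProduct.assoc k C C P).symm.toLinearMap ∘ₗ ρ.lTensor C ∘ₗ ρ

variable [Coalgebra k C] [Coalgebra k D] {ρ : P →ₗ[k] C ⊗[k] P} {τ : Q →ₗ[k] D ⊗[k] Q}

namespace IsLeftCoaction

lemma tensor (hρ : IsLeftCoaction ρ) (hτ : IsLeftCoaction τ) :
    IsLeftCoaction (tensorCoaction ρ τ) where
  counit := by
    have counit_eq : Coalgebra.counit (R := k) (A := C ⊗[k] D) =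
        LinearMap.mul' k k ∘ₗ TensorProduct.map Coalgebra.counit Coalgebra.counit :=
      TensorProduct.ext' fun c d ↦ by simp [mul_comm]
    rw [counit_eq, coactBy_tensorCoaction, hρ.counit, hτ.counit, TensorProduct.map_id]
  coassoc := by
    let interchange := (TensorProduct.tensorTensorTensorComm k C C D D).toLinearMap.rTensor
      (P ⊗[k] Q) ∘ₗ (TensorProduct.tensorTensorTensorComm k (C ⊗[k] C) P (D ⊗[k] D) Q).toLinearMap
    have comul_eq : Coalgebra.comul.rTensor (P ⊗[k] Q) ∘ₗ
        (TensorProduct.tensorTensorTensorComm k C P D Q).toLinearMap =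
        interchange ∘ₗ TensorProduct.map (Coalgebra.comul.rTensor P) (Coalgebra.comul.rTensor Q) :=
      TensorProduct.ext_fourfold' fun _ _ _ _ ↦ rfl
    have assoc_eq : interchange ∘ₗ TensorProduct.map
          (TensorProduct.assoc k C C P).symm.toLinearMap
          (TensorProduct.assoc k D D Q).symm.toLinearMap =
        (TensorProduct.assoc k (C ⊗[k] D) (C ⊗[k] D) (P ⊗[k] Q)).symm.toLinearMap ∘ₗ
          (TensorProduct.tensorTensorTensorComm k C P D Q).toLinearMap.lTensor (C ⊗[k] D) ∘ₗ
          (TensorProduct.tensorTensorTensorComm k C (C ⊗[k] P) D (D ⊗[k] Q)).toLinearMap := by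
      ext; rfl
    have coact_eq : (tensorCoaction ρ τ).lTensor (C ⊗[k] D) ∘ₗ
          (TensorProduct.tensorTensorTensorComm k C P D Q).toLinearMap =
        (TensorProduct.tensorTensorTensorComm k C P D Q).toLinearMap.lTensor (C ⊗[k] D) ∘ₗ
          (TensorProduct.tensorTensorTensorComm k C (C ⊗[k] P) D (D ⊗[k] Q)).toLinearMap ∘ₗ
          TensorProduct.map (ρ.lTensor C) (τ.lTensor D) :=
      TensorProduct.ext_fourfold' fun _ _ _ _ ↦ rfl
    calc Coalgebra.comul.rTensor (P ⊗[k] Q) ∘ₗ tensorCoaction ρ τ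
      _ = interchange ∘ₗ TensorProduct.map (Coalgebra.comul.rTensor P ∘ₗ ρ)
            (Coalgebra.comul.rTensor Q ∘ₗ τ) := by
        rw [TensorProduct.map_comp, ← LinearMap.comp_assoc, ← comul_eq]; rfl
      _ = interchange ∘ₗ TensorProduct.map (TensorProduct.assoc k C C P).symm.toLinearMap
            (TensorProduct.assoc k D D Q).symm.toLinearMap ∘ₗ
            TensorProduct.map (ρ.lTensor C) (τ.lTensor D) ∘ₗ TensorProduct.map ρ τ := by
        simp only [hρ.coassoc, hτ.coassoc, TensorProduct.map_comp]
      _ = (TensorProduct.assoc k (C ⊗[k] D) (C ⊗[k] D) (P ⊗[k] Q)).symm.toLinearMap ∘ₗ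
            (tensorCoaction ρ τ).lTensor (C ⊗[k] D) ∘ₗ tensorCoaction ρ τ := by
        rw [← LinearMap.comp_assoc, assoc_eq]
        exact congr((TensorProduct.assoc k (C ⊗[k] D) (C ⊗[k] D) (P ⊗[k] Q)).symm.toLinearMap ∘ₗ
          $coact_eq.symm ∘ₗ TensorProduct.map ρ τ)

lemma coactBy_comp_coactBy {k C : Type u} [CommRing k] [AddCommGroup C] [Module k C]
    [Coalgebra k C] [Module k P] {ρ : P →ₗ[k] C ⊗[k] P} (hρ : IsLeftCoaction ρ)
    (f g : C →ₗ[k] k) : coactBy ρ f ∘ₗ coactBy ρ g = coactBy ρ (convS k g f) := by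
  have eval_coact : coactBy ρ f ∘ₗ (TensorProduct.lid k P).toLinearMap ∘ₗ g.rTensor P =
      (TensorProduct.lid k P).toLinearMap ∘ₗ
        (LinearMap.mul' k k ∘ₗ TensorProduct.map g f).rTensor P ∘ₗ
        (TensorProduct.assoc k C C P).symm.toLinearMap ∘ₗ ρ.lTensor C := by
    refine TensorProduct.ext' fun c p ↦ ?_
    have eval_tmul : (TensorProduct.lid k P).toLinearMap ∘ₗ
        (LinearMap.mul' k k ∘ₗ TensorProduct.map g f).rTensor P ∘ₗ
        (TensorProduct.assoc k C C P).symm.toLinearMap ∘ₗ TensorProduct.mk k C (C ⊗[k] P) c =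
        g c • ((TensorProduct.lid k P).toLinearMap ∘ₗ f.rTensor P) :=
      TensorProduct.ext' fun d p ↦ by simp [mul_smul]
    simpa [coactBy] using (LinearMap.congr_fun eval_tmul (ρ p)).symm
  calc coactBy ρ f ∘ₗ coactBy ρ g
    _ = (coactBy ρ f ∘ₗ (TensorProduct.lid k P).toLinearMap ∘ₗ g.rTensor P) ∘ₗ ρ := rfl
    _ = (TensorProduct.lid k P).toLinearMap ∘ₗ
          (LinearMap.mul' k k ∘ₗ TensorProduct.map g f).rTensor P ∘ₗ
            Coalgebra.comul.rTensor P ∘ₗ ρ := by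
      rw [eval_coact, hρ.coassoc]; rfl
    _ = coactBy ρ (convS k g f) := by
      rw [coactBy, convS, ← LinearMap.comp_assoc Coalgebra.comul,
        LinearMap.rTensor_comp P _ Coalgebra.comul]
      rfl

end IsLeftCoaction

end Coaction

section Convolution

variable {k C A : Type*} [CommRing k] [AddCommGroup C] [Module k C] [Coalgebra k C]
  [Ring A] [Algebra k A] {m : A ⊗[k] A →ₗ[k] A} {X Y : C →ₗ[k] A}

/-- Convolution of linear maps out of a coalgebra with respect to an arbitrary product `m` on the
target, which need not be the product of the algebra `A`. -/
noncomputable def convWith (m : A ⊗[k] A →ₗ[k] A) (X Y : C →ₗ[k] A) : C →ₗ[k] A :=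
  m ∘ₗ TensorProduct.map X Y ∘ₗ Coalgebra.comul

lemma mul'_assoc :
    LinearMap.mul' k A ∘ₗ (LinearMap.mul' k A).rTensor A ∘ₗ
        (TensorProduct.assoc k A A A).symm.toLinearMap =
      LinearMap.mul' k A ∘ₗ (LinearMap.mul' k A).lTensor A := by
  ext; simp [mul_assoc]

lemma convWith_assoc
    (hm : m ∘ₗ m.rTensor A ∘ₗ (TensorProduct.assoc k A A A).symm.toLinearMap = m ∘ₗ m.lTensor A)
    (X Y Z : C →ₗ[k] A) : convWith m (convWith m X Y) Z = convWith m X (convWith m Y Z) := by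
  calc convWith m (convWith m X Y) Z
    _ = m ∘ₗ m.rTensor A ∘ₗ TensorProduct.map (TensorProduct.map X Y) Z ∘ₗ
          Coalgebra.comul.rTensor C ∘ₗ Coalgebra.comul := by
      simp only [convWith, ← LinearMap.comp_assoc]
      congr 1
      ext; simp
    _ = (m ∘ₗ m.rTensor A ∘ₗ (TensorProduct.assoc k A A A).symm.toLinearMap) ∘ₗ
          TensorProduct.map X (TensorProduct.map Y Z) ∘ₗ
          Coalgebra.comul.lTensor C ∘ₗ Coalgebra.comul := by
      rw [← Coalgebra.coassoc_symm, ← LinearMap.comp_assoc _ _ (TensorProduct.map _ Z),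
        TensorProduct.map_map_comp_assoc_symm_eq]
      rfl
    _ = convWith m X (convWith m Y Z) := by
      rw [hm]
      simp only [convWith, ← LinearMap.comp_assoc]
      congr 1
      ext; simp

lemma one_convWith (hm : ∀ a, m (1 ⊗ₜ a) = a) (X : C →ₗ[k] A) :
    convWith m (Algebra.linearMap k A ∘ₗ Coalgebra.counit) X = X := by
  have map_counit : m ∘ₗ TensorProduct.map (Algebra.linearMap k A ∘ₗ Coalgebra.counit) X =
      X ∘ₗ (TensorProduct.lid k C).toLinearMap ∘ₗ
        (Coalgebra.counit (R := k) (A := C)).rTensor C := by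
    ext; simp [Algebra.algebraMap_eq_smul_one, ← TensorProduct.smul_tmul', hm]
  rw [convWith, ← LinearMap.comp_assoc, map_counit]
  ext; simp

lemma convWith_one (hm : ∀ a, m (a ⊗ₜ 1) = a) (X : C →ₗ[k] A) :
    convWith m X (Algebra.linearMap k A ∘ₗ Coalgebra.counit) = X := by
  have map_counit : m ∘ₗ TensorProduct.map X (Algebra.linearMap k A ∘ₗ Coalgebra.counit) =
      X ∘ₗ (TensorProduct.rid k C).toLinearMap ∘ₗ
        (Coalgebra.counit (R := k) (A := C)).lTensor C := by
    ext; simp [Algebra.algebraMap_eq_smul_one, hm]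
  rw [convWith, ← LinearMap.comp_assoc, map_counit]
  ext; simp

/-- `Y` is a two-sided inverse of `X` for the convolution defined by the product `m`. -/
def IsConvInverse (m : A ⊗[k] A →ₗ[k] A) (X Y : C →ₗ[k] A) : Prop :=
  convWith m X Y = Algebra.linearMap k A ∘ₗ Coalgebra.counit ∧
    convWith m Y X = Algebra.linearMap k A ∘ₗ Coalgebra.counit

lemma IsConvInverse.bijective_convWith
    (hm : m ∘ₗ m.rTensor A ∘ₗ (TensorProduct.assoc k A A A).symm.toLinearMap = m ∘ₗ m.lTensor A)
    (hm_one : ∀ a, m (a ⊗ₜ 1) = a) (h : IsConvInverse m X Y) :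
    Function.Bijective (convWith m · X) :=
  Function.bijective_iff_has_inverse.2 ⟨(convWith m · Y),
    fun Z ↦ by simp only [convWith_assoc hm, h.1, convWith_one hm_one],
    fun Z ↦ by simp only [convWith_assoc hm, h.2, convWith_one hm_one]⟩

lemma exists_isConvInverse_of_bijective_convWith
    (hm : m ∘ₗ m.rTensor A ∘ₗ (TensorProduct.assoc k A A A).symm.toLinearMap = m ∘ₗ m.lTensor A)
    (one_hm : ∀ a, m (1 ⊗ₜ a) = a) (hm_one : ∀ a, m (a ⊗ₜ 1) = a)
    (h : Function.Bijective (convWith m · X)) : ∃ Y, IsConvInverse m X Y := by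
  obtain ⟨Y, hY : convWith m Y X = _⟩ := h.surjective (Algebra.linearMap k A ∘ₗ Coalgebra.counit)
  refine ⟨Y, h.injective ?_, hY⟩
  simp only [convWith_assoc hm, hY, convWith_one hm_one, one_convWith one_hm]

end Convolution

section TwistedProduct

variable {k K A : Type u} [CommRing k] [Ring K] [Bialgebra k K] [Ring A] [Algebra k A]

lemma leftTwistedMul_eq_mul'_comp_coactBy (ρ : A →ₗ[k] K ⊗[k] A) (σ : K ⊗[k] K →ₗ[k] k) :
    leftTwistedMul k ρ σ = LinearMap.mul' k A ∘ₗ coactBy (tensorCoaction ρ ρ) σ := by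
  have eval_mul : (TensorProduct.lid k A).toLinearMap ∘ₗ
        TensorProduct.map σ (LinearMap.mul' k A) =
      LinearMap.mul' k A ∘ₗ (TensorProduct.lid k (A ⊗[k] A)).toLinearMap ∘ₗ
        σ.rTensor (A ⊗[k] A) :=
    TensorProduct.ext' fun c p ↦ by simp
  exact congr($eval_mul ∘ₗ tensorCoaction ρ ρ)

variable {ρ : A →ₐ[k] K ⊗[k] A}

lemma toLinearMap_comp_mul' (ρ : A →ₐ[k] K ⊗[k] A) :
    ρ.toLinearMap ∘ₗ LinearMap.mul' k A =
      TensorProduct.map (LinearMap.mul' k K) (LinearMap.mul' k A) ∘ₗ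
        tensorCoaction ρ.toLinearMap ρ.toLinearMap := by
  refine TensorProduct.ext' fun a b ↦ ?_
  have mul_coaction : ρ a * ρ b = TensorProduct.map (LinearMap.mul' k K) (LinearMap.mul' k A)
      (TensorProduct.tensorTensorTensorComm k K A K A (ρ a ⊗ₜ ρ b)) :=
    LinearMap.congr_fun LinearMap.mul'_tensor (ρ a ⊗ₜ ρ b)
  simpa [tensorCoaction] using mul_coaction

lemma leftTwistedMul_comp_lTensor (hρ : IsLeftCoaction ρ.toLinearMap) (σ : K ⊗[k] K →ₗ[k] k) :
    leftTwistedMul k ρ.toLinearMap σ ∘ₗ (leftTwistedMul k ρ.toLinearMap σ).lTensor A =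
      LinearMap.mul' k A ∘ₗ (LinearMap.mul' k A).lTensor A ∘ₗ
        coactBy (tensorCoaction ρ.toLinearMap (tensorCoaction ρ.toLinearMap ρ.toLinearMap))
          (convS k (LinearMap.mul' k k ∘ₗ TensorProduct.map Coalgebra.counit σ)
            (σ ∘ₗ (LinearMap.mul' k K).lTensor K)) := by
  have mul_equivariant := tensorCoaction_comp_lTensor ρ.toLinearMap (toLinearMap_comp_mul' ρ)
  rw [← (hρ.tensor (hρ.tensor hρ)).coactBy_comp_coactBy, coactBy_tensorCoaction, hρ.counit,
    leftTwistedMul_eq_mul'_comp_coactBy, LinearMap.lTensor_comp, LinearMap.comp_assoc]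
  exact congr(LinearMap.mul' k A ∘ₗ $(coactBy_comp_of_equivariant mul_equivariant σ) ∘ₗ
    (coactBy (tensorCoaction ρ.toLinearMap ρ.toLinearMap) σ).lTensor A)

lemma leftTwistedMul_comp_rTensor (hρ : IsLeftCoaction ρ.toLinearMap) (σ : K ⊗[k] K →ₗ[k] k) :
    leftTwistedMul k ρ.toLinearMap σ ∘ₗ (leftTwistedMul k ρ.toLinearMap σ).rTensor A ∘ₗ
        (TensorProduct.assoc k A A A).symm.toLinearMap =
      LinearMap.mul' k A ∘ₗ (LinearMap.mul' k A).lTensor A ∘ₗ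
        coactBy (tensorCoaction ρ.toLinearMap (tensorCoaction ρ.toLinearMap ρ.toLinearMap))
          (convS k (LinearMap.mul' k k ∘ₗ TensorProduct.map σ Coalgebra.counit ∘ₗ
              (TensorProduct.assoc k K K K).symm.toLinearMap)
            (σ ∘ₗ (LinearMap.mul' k K).rTensor K ∘ₗ
              (TensorProduct.assoc k K K K).symm.toLinearMap)) := by
  let α := tensorCoaction ρ.toLinearMap ρ.toLinearMap
  have mul_equivariant := tensorCoaction_comp_rTensor ρ.toLinearMap (toLinearMap_comp_mul' ρ)
  have reassociate := coactBy_comp_of_equivariant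
    (tensorCoaction_comp_assoc_symm ρ.toLinearMap ρ.toLinearMap ρ.toLinearMap)
  calc leftTwistedMul k ρ.toLinearMap σ ∘ₗ (leftTwistedMul k ρ.toLinearMap σ).rTensor A ∘ₗ
        (TensorProduct.assoc k A A A).symm.toLinearMap
    _ = LinearMap.mul' k A ∘ₗ (coactBy α σ ∘ₗ (LinearMap.mul' k A).rTensor A) ∘ₗ
          TensorProduct.map (coactBy α σ) (coactBy ρ.toLinearMap Coalgebra.counit) ∘ₗ
          (TensorProduct.assoc k A A A).symm.toLinearMap := by
      rw [leftTwistedMul_eq_mul'_comp_coactBy, LinearMap.rTensor_comp, hρ.counit]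
      rfl
    _ = (LinearMap.mul' k A ∘ₗ (LinearMap.mul' k A).rTensor A) ∘ₗ
          coactBy (tensorCoaction α ρ.toLinearMap) (σ ∘ₗ (LinearMap.mul' k K).rTensor K) ∘ₗ
          coactBy (tensorCoaction α ρ.toLinearMap)
            (LinearMap.mul' k k ∘ₗ TensorProduct.map σ Coalgebra.counit) ∘ₗ
          (TensorProduct.assoc k A A A).symm.toLinearMap := by
      rw [coactBy_comp_of_equivariant mul_equivariant, coactBy_tensorCoaction]
      rfl
    _ = _ := by
      rw [reassociate, ← LinearMap.comp_assoc _ _ (coactBy _ _), reassociate,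
        ← (hρ.tensor (hρ.tensor hρ)).coactBy_comp_coactBy]
      simp only [← LinearMap.comp_assoc, ← mul'_assoc]

lemma leftTwistedMul_assoc (hρ : IsLeftCoaction ρ.toLinearMap) {σ σ' : K ⊗[k] K →ₗ[k] k}
    (hσ : IsTwoCocycle k σ σ') :
    leftTwistedMul k ρ.toLinearMap σ ∘ₗ (leftTwistedMul k ρ.toLinearMap σ).rTensor A ∘ₗ
        (TensorProduct.assoc k A A A).symm.toLinearMap =
      leftTwistedMul k ρ.toLinearMap σ ∘ₗ (leftTwistedMul k ρ.toLinearMap σ).lTensor A := by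
  rw [leftTwistedMul_comp_rTensor hρ, hσ.1, leftTwistedMul_comp_lTensor hρ]

lemma leftTwistedMul_one_tmul (hρ : IsLeftCoaction ρ.toLinearMap) {σ : K ⊗[k] K →ₗ[k] k}
    (hσ : ∀ h : K, σ (1 ⊗ₜ h) = Coalgebra.counit (R := k) h) (a : A) :
    leftTwistedMul k ρ.toLinearMap σ (1 ⊗ₜ a) = a := by
  have eval_one : (TensorProduct.lid k A).toLinearMap ∘ₗ
      TensorProduct.map σ (LinearMap.mul' k A) ∘ₗ
        (TensorProduct.tensorTensorTensorComm k K A K A).toLinearMap ∘ₗ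
          TensorProduct.mk k (K ⊗[k] A) (K ⊗[k] A) (1 ⊗ₜ 1) =
      (TensorProduct.lid k A).toLinearMap ∘ₗ Coalgebra.counit.rTensor A :=
    TensorProduct.ext' fun _ _ ↦ by simp [hσ]
  rw [← Algebra.TensorProduct.one_def, ← map_one ρ] at eval_one
  exact (LinearMap.congr_fun eval_one (ρ a)).trans (LinearMap.congr_fun hρ.counit a)

lemma leftTwistedMul_tmul_one (hρ : IsLeftCoaction ρ.toLinearMap) {σ : K ⊗[k] K →ₗ[k] k}
    (hσ : ∀ h : K, σ (h ⊗ₜ 1) = Coalgebra.counit (R := k) h) (a : A) :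
    leftTwistedMul k ρ.toLinearMap σ (a ⊗ₜ 1) = a := by
  have eval_one : (TensorProduct.lid k A).toLinearMap ∘ₗ
      TensorProduct.map σ (LinearMap.mul' k A) ∘ₗ
        (TensorProduct.tensorTensorTensorComm k K A K A).toLinearMap ∘ₗ
          (TensorProduct.mk k (K ⊗[k] A) (K ⊗[k] A)).flip (1 ⊗ₜ 1) =
      (TensorProduct.lid k A).toLinearMap ∘ₗ Coalgebra.counit.rTensor A :=
    TensorProduct.ext' fun _ _ ↦ by simp [hσ]
  rw [← Algebra.TensorProduct.one_def, ← map_one ρ] at eval_one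
  exact (LinearMap.congr_fun eval_one (ρ a)).trans (LinearMap.congr_fun hρ.counit a)

end TwistedProduct

section Cofree

variable {k C V : Type*} [CommRing k] [AddCommGroup C] [Module k C] [Coalgebra k C]
  [AddCommGroup V] [Module k V]

/-- `Y` is a right `C`-comodule map from `C` to the cofree comodule `V ⊗ C`. -/
def IsColinear (Y : C →ₗ[k] V ⊗[k] C) : Prop :=
  (TensorProduct.assoc k V C C).toLinearMap ∘ₗ Y.rTensor C ∘ₗ Coalgebra.comul =
    Coalgebra.comul.lTensor V ∘ₗ Y

/-- The linear map `(id ⊗ ε) ∘ Y` corresponding to a comodule map `Y` into a cofree comodule. -/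
noncomputable def cofreePart (Y : C →ₗ[k] V ⊗[k] C) : C →ₗ[k] V :=
  (TensorProduct.rid k V).toLinearMap ∘ₗ Coalgebra.counit.lTensor V ∘ₗ Y

lemma isColinear_rTensor_comp_comul (X : C →ₗ[k] V) :
    IsColinear (X.rTensor C ∘ₗ Coalgebra.comul) := by
  have map_assoc : (TensorProduct.assoc k V C C).toLinearMap ∘ₗ (X.rTensor C).rTensor C =
      X.rTensor (C ⊗[k] C) ∘ₗ (TensorProduct.assoc k C C C).toLinearMap := by
    ext; rfl
  have comul_comm : Coalgebra.comul.lTensor V ∘ₗ X.rTensor C =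
      X.rTensor (C ⊗[k] C) ∘ₗ Coalgebra.comul.lTensor C := by
    ext; rfl
  rw [IsColinear, ← LinearMap.comp_assoc _ _ (Coalgebra.comul.lTensor V), comul_comm,
    LinearMap.comp_assoc, ← Coalgebra.coassoc, LinearMap.rTensor_comp]
  exact congr($map_assoc ∘ₗ Coalgebra.comul.rTensor C ∘ₗ Coalgebra.comul)

lemma IsColinear.rTensor_cofreePart {Y : C →ₗ[k] V ⊗[k] C} (hY : IsColinear Y) :
    (cofreePart Y).rTensor C ∘ₗ Coalgebra.comul = Y := by
  have contract : ((TensorProduct.rid k V).toLinearMap ∘ₗ Coalgebra.counit.lTensor V).rTensor C =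
      ((TensorProduct.lid k C).toLinearMap ∘ₗ Coalgebra.counit.rTensor C).lTensor V ∘ₗ
        (TensorProduct.assoc k V C C).toLinearMap := by
    ext; simp [TensorProduct.smul_tmul]
  have counit_comul : ((TensorProduct.lid k C).toLinearMap ∘ₗ Coalgebra.counit.rTensor C) ∘ₗ
      Coalgebra.comul = LinearMap.id := by
    ext; simp
  calc (cofreePart Y).rTensor C ∘ₗ Coalgebra.comul
    _ = ((TensorProduct.rid k V).toLinearMap ∘ₗ Coalgebra.counit.lTensor V).rTensor C ∘ₗ
          Y.rTensor C ∘ₗ Coalgebra.comul := by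
      rw [cofreePart, ← LinearMap.comp_assoc, LinearMap.rTensor_comp, LinearMap.comp_assoc]
    _ = (((TensorProduct.lid k C).toLinearMap ∘ₗ Coalgebra.counit.rTensor C) ∘ₗ
          Coalgebra.comul).lTensor V ∘ₗ Y := by
      rw [contract, LinearMap.comp_assoc, hY, LinearMap.lTensor_comp V _ Coalgebra.comul]
      rfl
    _ = Y := by rw [counit_comul, LinearMap.lTensor_id, LinearMap.id_comp]

lemma cofreePart_rTensor_comp_comul (X : C →ₗ[k] V) :
    cofreePart (X.rTensor C ∘ₗ Coalgebra.comul) = X := by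
  have counit_comm : (TensorProduct.rid k V).toLinearMap ∘ₗ Coalgebra.counit.lTensor V ∘ₗ
      X.rTensor C = X ∘ₗ (TensorProduct.rid k C).toLinearMap ∘ₗ Coalgebra.counit.lTensor C := by
    ext; simp
  calc cofreePart (X.rTensor C ∘ₗ Coalgebra.comul)
    _ = (X ∘ₗ (TensorProduct.rid k C).toLinearMap ∘ₗ Coalgebra.counit.lTensor C) ∘ₗ
          Coalgebra.comul := by rw [← counit_comm]; rfl
    _ = X := by ext; simp

variable {D E : Type*} [AddCommGroup D] [Module k D] [AddCommGroup E] [Module k E]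

/-- `τ` commutes with the regular right coaction of `C` on itself, so that `C` becomes an
`(E, C)`-bicomodule when `τ` is a left coaction. -/
def IsBicomoduleCoaction (τ : C →ₗ[k] E ⊗[k] C) : Prop :=
  Coalgebra.comul.lTensor E ∘ₗ τ =
    (TensorProduct.assoc k E C C).toLinearMap ∘ₗ τ.rTensor C ∘ₗ Coalgebra.comul

lemma IsColinear.coactBy_comp {ρ : V →ₗ[k] D ⊗[k] V} {τ : C →ₗ[k] E ⊗[k] C}
    (hτ : IsBicomoduleCoaction τ) {Y : C →ₗ[k] V ⊗[k] C} (hY : IsColinear Y)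
    (f : D ⊗[k] E →ₗ[k] k) :
    IsColinear (coactBy (tensorCoaction ρ τ) f ∘ₗ Y) := by
  let κ := (TensorProduct.assoc k E C C).toLinearMap ∘ₗ τ.rTensor C
  have comul_equivariant := coactBy_comp_of_equivariant
    (tensorCoaction_comp_lTensor ρ (η := LinearMap.id) (τ' := κ) hτ.symm) f
  have comm_assoc : (TensorProduct.tensorTensorTensorComm k D V E (C ⊗[k] C)).toLinearMap ∘ₗ
      (TensorProduct.assoc k E C C).toLinearMap.lTensor (D ⊗[k] V) ∘ₗ
        (TensorProduct.assoc k (D ⊗[k] V) (E ⊗[k] C) C).toLinearMap =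
      (TensorProduct.assoc k V C C).toLinearMap.lTensor (D ⊗[k] E) ∘ₗ
        (TensorProduct.assoc k (D ⊗[k] E) (V ⊗[k] C) C).toLinearMap ∘ₗ
        (TensorProduct.tensorTensorTensorComm k D V E C).toLinearMap.rTensor C := by
    ext; rfl
  have assoc_equivariant : tensorCoaction ρ κ ∘ₗ (TensorProduct.assoc k V C C).toLinearMap =
      TensorProduct.map LinearMap.id (TensorProduct.assoc k V C C).toLinearMap ∘ₗ
        (TensorProduct.assoc k (D ⊗[k] E) (V ⊗[k] C) C).toLinearMap ∘ₗ
        (tensorCoaction ρ τ).rTensor C := by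
    ext v c c'
    exact LinearMap.congr_fun comm_assoc ((ρ v ⊗ₜ τ c) ⊗ₜ c')
  calc (TensorProduct.assoc k V C C).toLinearMap ∘ₗ
        (coactBy (tensorCoaction ρ τ) f ∘ₗ Y).rTensor C ∘ₗ Coalgebra.comul
    _ = ((TensorProduct.assoc k V C C).toLinearMap ∘ₗ
          (coactBy (tensorCoaction ρ τ) f).rTensor C) ∘ₗ Y.rTensor C ∘ₗ Coalgebra.comul := by
      rw [LinearMap.rTensor_comp]; rfl
    _ = coactBy (tensorCoaction ρ κ) f ∘ₗ Coalgebra.comul.lTensor V ∘ₗ Y := by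
      rw [← hY, ← LinearMap.comp_assoc (Y.rTensor C ∘ₗ Coalgebra.comul),
        coactBy_comp_of_equivariant assoc_equivariant, LinearMap.comp_id,
        coactBy_assoc_comp_rTensor]
    _ = Coalgebra.comul.lTensor V ∘ₗ coactBy (tensorCoaction ρ τ) f ∘ₗ Y := by
      rw [← LinearMap.comp_assoc, comul_equivariant, LinearMap.lTensor_id, LinearMap.comp_id,
        LinearMap.comp_assoc]

end Cofree

section Cleaving

variable {k K H A : Type u} [CommRing k] [Ring K] [Bialgebra k K] [Ring H] [Bialgebra k H]
  [Ring A] [Algebra k A]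

/-- The linear map `Θ` determined by `(Θ ⊗ id) ∘ Δ = f ▷ ((X ⊗ id) ∘ Δ)`, where `f ▷` is the action
of the functional `f` on the `K ⊗ K`-comodule `A ⊗ H`. -/
noncomputable def twistMap (ρ : A →ₗ[k] K ⊗[k] A) (ρH : H →ₗ[k] K ⊗[k] H) (f : K ⊗[k] K →ₗ[k] k)
    (X : H →ₗ[k] A) : H →ₗ[k] A :=
  cofreePart (coactBy (tensorCoaction ρ ρH) f ∘ₗ X.rTensor H ∘ₗ Coalgebra.comul)

lemma rTensor_twistMap_comp_comul (ρ : A →ₗ[k] K ⊗[k] A) {ρH : H →ₗ[k] K ⊗[k] H}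
    (hΔ : IsBicomoduleCoaction ρH) (f : K ⊗[k] K →ₗ[k] k) (X : H →ₗ[k] A) :
    (twistMap ρ ρH f X).rTensor H ∘ₗ Coalgebra.comul =
      coactBy (tensorCoaction ρ ρH) f ∘ₗ X.rTensor H ∘ₗ Coalgebra.comul :=
  ((isColinear_rTensor_comp_comul X).coactBy_comp hΔ f).rTensor_cofreePart

lemma twistMap_twistMap {ρ : A →ₗ[k] K ⊗[k] A} {ρH : H →ₗ[k] K ⊗[k] H} (hρ : IsLeftCoaction ρ)
    (hρH : IsLeftCoaction ρH) (hΔ : IsBicomoduleCoaction ρH)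
    {f g : K ⊗[k] K →ₗ[k] k} (hfg : convS k g f = Coalgebra.counit) (X : H →ₗ[k] A) :
    twistMap ρ ρH f (twistMap ρ ρH g X) = X := by
  rw [twistMap, rTensor_twistMap_comp_comul ρ hΔ, ← LinearMap.comp_assoc,
    (hρ.tensor hρH).coactBy_comp_coactBy, hfg, (hρ.tensor hρH).counit, LinearMap.id_comp,
    cofreePart_rTensor_comp_comul]

lemma convWith_leftTwistedMul {ρ : A →ₗ[k] K ⊗[k] A} {ρH : H →ₗ[k] K ⊗[k] H}
    (hΔ : IsBicomoduleCoaction ρH) {j : H →ₗ[k] A}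
    (hj : ρ ∘ₗ j = TensorProduct.map LinearMap.id j ∘ₗ ρH)
    (σ : K ⊗[k] K →ₗ[k] k) (X : H →ₗ[k] A) :
    convWith (leftTwistedMul k ρ σ) X j =
      convWith (LinearMap.mul' k A) (twistMap ρ ρH σ X) j := by
  have j_equivariant := coactBy_comp_of_equivariant (tensorCoaction_comp_lTensor ρ hj) σ
  rw [LinearMap.lTensor_id, LinearMap.comp_id] at j_equivariant
  calc convWith (leftTwistedMul k ρ σ) X j
    _ = LinearMap.mul' k A ∘ₗ (coactBy (tensorCoaction ρ ρ) σ ∘ₗ j.lTensor A) ∘ₗ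
          X.rTensor H ∘ₗ Coalgebra.comul := by
      rw [convWith, leftTwistedMul_eq_mul'_comp_coactBy, ← LinearMap.lTensor_comp_rTensor]; rfl
    _ = LinearMap.mul' k A ∘ₗ j.lTensor A ∘ₗ (twistMap ρ ρH σ X).rTensor H ∘ₗ
          Coalgebra.comul := by
      rw [j_equivariant, rTensor_twistMap_comp_comul ρ hΔ]; rfl
    _ = convWith (LinearMap.mul' k A) (twistMap ρ ρH σ X) j := by
      rw [convWith, ← LinearMap.lTensor_comp_rTensor]; rfl

lemma bijective_twistMap {ρ : A →ₗ[k] K ⊗[k] A} {ρH : H →ₗ[k] K ⊗[k] H} (hρ : IsLeftCoaction ρ)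
    (hρH : IsLeftCoaction ρH) (hΔ : IsBicomoduleCoaction ρH)
    {σ σ' : K ⊗[k] K →ₗ[k] k} (h : convS k σ σ' = Coalgebra.counit)
    (h' : convS k σ' σ = Coalgebra.counit) :
    Function.Bijective (twistMap ρ ρH σ) :=
  Function.bijective_iff_has_inverse.2 ⟨twistMap ρ ρH σ',
    twistMap_twistMap hρ hρH hΔ h, twistMap_twistMap hρ hρH hΔ h'⟩

theorem isCleftWith_leftTwistedMul (c : ComodAlg k H A) {ρ : A →ₐ[k] K ⊗[k] A}
    {ρH : H →ₗ[k] K ⊗[k] H} (hρ : IsLeftCoaction ρ.toLinearMap) (hρH : IsLeftCoaction ρH)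
    (hΔ : IsBicomoduleCoaction ρH) {j g : H →ₗ[k] A} (hjH : IsComodMap k c j)
    (hjK : ρ.toLinearMap ∘ₗ j = TensorProduct.map LinearMap.id j ∘ₗ ρH)
    (hg : IsConvInverse (LinearMap.mul' k A) j g)
    {σ σ' : K ⊗[k] K →ₗ[k] k} (hσ : IsTwoCocycle k σ σ') :
    IsCleftWith k c (leftTwistedMul k ρ.toLinearMap σ) := by
  obtain ⟨-, hσ_one, one_hσ, hσσ', hσ'σ⟩ := id hσ
  have bijective_mul := hg.bijective_convWith mul'_assoc (by simp)
  have bijective_twisted :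
      Function.Bijective (convWith (leftTwistedMul k ρ.toLinearMap σ) · j) := by
    simp only [convWith_leftTwistedMul hΔ hjK]
    exact bijective_mul.comp (bijective_twistMap hρ hρH hΔ hσσ' hσ'σ)
  exact ⟨j, hjH, exists_isConvInverse_of_bijective_convWith (leftTwistedMul_assoc hρ hσ)
    (leftTwistedMul_one_tmul hρ one_hσ) (leftTwistedMul_tmul_one hρ hσ_one) bijective_twisted⟩

end Cleaving

end QPB

theorem statement19_general {k K H M : Type u} [CommRing k] [Ring K] [Ring H]
    [Bialgebra k K] [Bialgebra k H] [TopologicalSpace M] (F : SheafCA k H M)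
    (ρ : ∀ U : Opens M, F.obj U →ₐ[k] K ⊗[k] F.obj U)
    (hρ : ∀ U, IsLeftCoaction (ρ U).toLinearMap)
    {ρH : H →ₗ[k] K ⊗[k] H} (hρH : IsLeftCoaction ρH) (hΔ : IsBicomoduleCoaction ρH)
    (𝒰 : Set (Opens M)) (hcover : sSup 𝒰 = ⊤) (j : ∀ V ∈ 𝒰, H →ₗ[k] F.obj V)
    (hjcomod : ∀ V hV, IsComodMap k (F.comod V) (j V hV))
    (hjconv : ∀ V hV, ∃ g, IsConvInverse (LinearMap.mul' k (F.obj V)) (j V hV) g)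
    (hjK : ∀ V hV,
      (ρ V).toLinearMap ∘ₗ j V hV = TensorProduct.map LinearMap.id (j V hV) ∘ₗ ρH)
    {σ σ' : K ⊗[k] K →ₗ[k] k} (hσ : IsTwoCocycle k σ σ') :
    IsQPBWith k F (fun V ↦ (ComodAlg.coinv (F.comod V) : Set (F.obj V)))
      (fun V ↦ leftTwistedMul k (ρ V).toLinearMap σ) := by
  refine ⟨𝒰, hcover, fun V hV ↦ ⟨rfl, ?_⟩⟩
  obtain ⟨g, hg⟩ := hjconv V hV
  exact isCleftWith_leftTwistedMul (F.comod V) (hρ V) hρH hΔ (hjcomod V hV) (hjK V hV) hg hσ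

/-- **Statement 19.**  Twisting a sheaf of `(K,H)`-bicomodule algebras, which is an
`H`-quantum principal bundle over `(M, F^{co H})` with `(K,H)`-bicomodule cleaving maps,
by a 2-cocycle `σ` of the external Hopf algebra `K` yields again an `H`-quantum principal
bundle, over `(M, Σ ∘ F^{co H})`. -/
theorem statement19 (k K H M : Type u) [Field k] [Ring K] [Ring H]
    [HopfAlgebra k K] [HopfAlgebra k H] [TopologicalSpace M]
    (F : SheafCA k H M)
    -- the left `K`-comodule algebra structures on the values of `F` ...
    (ρ : ∀ U : Opens M, F.obj U →ₐ[k] K ⊗[k] F.obj U)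
    -- ... are counital and coassociative left coactions ...
    (hρcounit : ∀ U : Opens M,
      (TensorProduct.lid k (F.obj U)).toLinearMap ∘ₗ
          (TensorProduct.map (Coalgebra.counit (R := k) (A := K)) LinearMap.id) ∘ₗ
          (ρ U).toLinearMap
        = LinearMap.id)
    (hρcoassoc : ∀ U : Opens M,
      (TensorProduct.map (Coalgebra.comul (R := k) (A := K)) LinearMap.id) ∘ₗ
          (ρ U).toLinearMap
        = (TensorProduct.assoc k K K (F.obj U)).symm.toLinearMap ∘ₗ
            (TensorProduct.map LinearMap.id (ρ U).toLinearMap) ∘ₗ (ρ U).toLinearMap)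
    -- ... commuting with the right `H`-coactions (bicomodule condition) ...
    (hcomm : ∀ U : Opens M,
      (TensorProduct.assoc k K (F.obj U) H).toLinearMap ∘ₗ
          (TensorProduct.map (ρ U).toLinearMap LinearMap.id) ∘ₗ
          (F.comod U).δ.toLinearMap
        = (TensorProduct.map LinearMap.id (F.comod U).δ.toLinearMap) ∘ₗ (ρ U).toLinearMap)
    (hρres : ∀ (U V : Opens M) (h : V ≤ U) (x : F.obj U),
      ρ V (F.res h x)
        = TensorProduct.map LinearMap.id (F.res h).toLinearMap (ρ U x))
    -- the compatible left `K`-comodule structure on the `H`-comodule `(H, Δ)`,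
    -- making it a `(K,H)`-bicomodule:
    (ρH : H →ₗ[k] K ⊗[k] H)
    (hρHcounit :
      (TensorProduct.lid k H).toLinearMap ∘ₗ
          (TensorProduct.map (Coalgebra.counit (R := k) (A := K)) LinearMap.id) ∘ₗ ρH
        = LinearMap.id)
    (hρHcoassoc :
      (TensorProduct.map (Coalgebra.comul (R := k) (A := K)) LinearMap.id) ∘ₗ ρH
        = (TensorProduct.assoc k K K H).symm.toLinearMap ∘ₗ
            (TensorProduct.map LinearMap.id ρH) ∘ₗ ρH)
    (hρHbicomod :
      (TensorProduct.map LinearMap.id (Coalgebra.comul (R := k) (A := H))) ∘ₗ ρH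
        = (TensorProduct.assoc k K H H).toLinearMap ∘ₗ
            (TensorProduct.map ρH LinearMap.id) ∘ₗ
            (Coalgebra.comul (R := k) (A := H)))
    -- `F` is an `H`-quantum principal bundle over `(M, F^{co H})`, whose cleaving maps
    -- `j_i`, relative to the cover `{U_i}`, are `(K,H)`-bicomodule maps:
    (𝒰 : Set (Opens M)) (hcover : sSup 𝒰 = ⊤)
    (j : ∀ V ∈ 𝒰, H →ₗ[k] F.obj V)
    (hjcomod : ∀ (V) (hV : V ∈ 𝒰), IsComodMap k (F.comod V) (j V hV))
    (hjconv : ∀ (V) (hV : V ∈ 𝒰), ∃ g : H →ₗ[k] F.obj V,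
      (LinearMap.mul' k (F.obj V)) ∘ₗ (TensorProduct.map (j V hV) g) ∘ₗ
          (Coalgebra.comul (R := k) (A := H))
        = (Algebra.linearMap k (F.obj V)) ∘ₗ (Coalgebra.counit (R := k) (A := H)) ∧
      (LinearMap.mul' k (F.obj V)) ∘ₗ (TensorProduct.map g (j V hV)) ∘ₗ
          (Coalgebra.comul (R := k) (A := H))
        = (Algebra.linearMap k (F.obj V)) ∘ₗ (Coalgebra.counit (R := k) (A := H)))
    (hjK : ∀ (V) (hV : V ∈ 𝒰),
      (ρ V).toLinearMap ∘ₗ (j V hV) = (TensorProduct.map LinearMap.id (j V hV)) ∘ₗ ρH)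
    -- `σ` is a 2-cocycle of `K`, with convolution inverse `σ'`:
    (σ σ' : K ⊗[k] K →ₗ[k] k) (hσ : IsTwoCocycle k σ σ') :
    -- then `Σ ∘ F` — same sheaf, same coactions, `σ`-twisted products — is an
    -- `H`-quantum principal bundle over `(M, Σ ∘ F^{co H})`:
    IsQPBWith k F (fun V => (ComodAlg.coinv (F.comod V) : Set (F.obj V)))
      (fun V => leftTwistedMul k (ρ V).toLinearMap σ) :=
  statement19_general F ρ (fun U ↦ ⟨hρcounit U, hρcoassoc U⟩) ⟨hρHcounit, hρHcoassoc⟩ hρHbicomod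
    𝒰 hcover j hjcomod hjconv hjK hσ
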